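/- For two chains C_n and C_k with a complete weighted candidate edge set β (one weighted edge (u_i, v_j, w_{ij}) for every i ≤ n, j ≤ k), the maximum weight of a valid alignment equals the maximum, over all strictly increasing partial injections σ from {1, …, n} to {1, …, k}, of the sum of the weights w_{i, σ(i)} over the domain of σ. -/

import Mathlib

/-- An edge conflict for the candidate edge `e = (a, b, w_e)` with another candidate edge
`d = (f, g, w_d)`, `d ≠ e`: (1) `a ∈ anc(f)` and `b ∉ anc(g)`, or (2) `a ∈ desc(f)` and
`b ∉ desc(g)`, or (3) `a = f`, or (4) `b = g`.  Here `anc`/`desc` are expressed via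
`Relation.TransGen` of the edge relations of the two DAGs: `a ∈ anc(f)` means there is a
directed path from `a` to `f`. -/
def Conf {V1 V2 : Type*} (E1 : V1 → V1 → Prop) (E2 : V2 → V2 → Prop)
    (e d : V1 × V2 × ℝ) : Prop :=
  d ≠ e ∧
    ((Relation.TransGen E1 e.1 d.1 ∧ ¬ Relation.TransGen E2 e.2.1 d.2.1) ∨
     (Relation.TransGen E1 d.1 e.1 ∧ ¬ Relation.TransGen E2 d.2.1 e.2.1) ∨
     e.1 = d.1 ∨ e.2.1 = d.2.1)

/-- A valid alignment is a set `M ⊆ β` such that each vertex of `V1` and of `V2` appears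
in at most one edge of `M`, and for every `e ∈ M`, `conf(e) ∩ M = ∅`. -/
def ValidAlignment {V1 V2 : Type*} (E1 : V1 → V1 → Prop) (E2 : V2 → V2 → Prop)
    (β M : Finset (V1 × V2 × ℝ)) : Prop :=
  M ⊆ β ∧
  (∀ e ∈ M, ∀ d ∈ M, e ≠ d → e.1 ≠ d.1 ∧ e.2.1 ≠ d.2.1) ∧
  (∀ e ∈ M, ∀ d ∈ M, ¬ Conf E1 E2 e d)

/-- The edge relation of the chain `C_n`: a directed edge from `v_i` to `v_{i+1}`. -/
def chainE (n : ℕ) (a b : Fin n) : Prop := (a : ℕ) + 1 = (b : ℕ)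

theorem transGen_chainE (n : ℕ) (a b : Fin n) :
    Relation.TransGen (chainE n) a b ↔ a < b := by
  constructor
  · intro h
    induction h with
    | single h => unfold chainE at h; rw [Fin.lt_def]; omega
    | tail _ h ih => unfold chainE at h; rw [Fin.lt_def] at *; omega
  · intro h
    obtain ⟨b, hb⟩ := b
    induction b with
    | zero => rw [Fin.lt_def] at h; simp at h
    | succ m ih =>
      rw [Fin.lt_def] at h
      simp only at h
      by_cases hm : (a : ℕ) = m
      · exact Relation.TransGen.single (by unfold chainE; simp [hm])
      · exact Relation.TransGen.tail (ih (by omega) (by rw [Fin.lt_def]; simp only; omega))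
          (by unfold chainE; simp)

open scoped Classical in
/-- For two chains `C_n` and `C_k` with a complete weighted candidate edge set (one edge
`(u_i, v_j, w_{ij})` for every `i ≤ n`, `j ≤ k`), the maximum weight of a valid alignment
equals the maximum, over all strictly increasing partial injections `σ` from `{1,…,n}` to
`{1,…,k}`, of the sum of the weights `w_{i,σ(i)}` over the domain of `σ`. -/
theorem chain_alignment_optimum (n k : ℕ) (w : Fin n → Fin k → ℝ)
    (hw : ∀ i j, w i j ∈ Set.Icc (0 : ℝ) 1) :
    sSup {x : ℝ | ∃ M, ValidAlignment (chainE n) (chainE k)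
          (Finset.univ.image (fun p : Fin n × Fin k => (p.1, p.2, w p.1 p.2))) M ∧
          ∑ e ∈ M, e.2.2 = x} =
      sSup {x : ℝ | ∃ (s : Finset (Fin n)) (σ : Fin n → Fin k),
          (∀ i ∈ s, ∀ j ∈ s, i < j → σ i < σ j) ∧ ∑ i ∈ s, w i (σ i) = x} := by
  by_cases hne : Nonempty (Fin n → Fin k)
  · obtain ⟨f0⟩ := hne
    congr 1
    ext x
    simp only [Set.mem_setOf_eq]
    constructor
    · rintro ⟨M, ⟨hM, h1, h2⟩, rfl⟩
      have hw' : ∀ e ∈ M, e.2.2 = w e.1 e.2.1 := by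
        intro e he
        have := hM he
        simp only [Finset.mem_image, Finset.mem_univ, true_and] at this
        obtain ⟨p, rfl⟩ := this
        rfl
      have hinj : Set.InjOn (fun e : Fin n × Fin k × ℝ => e.1) M := by
        intro e he d hd hed
        by_contra hc
        exact (h1 e he d hd hc).1 hed
      have hex : ∀ i, ∃ j : Fin k, ∀ e ∈ M, e.1 = i → e.2.1 = j := by
        intro i
        by_cases h : ∃ e ∈ M, e.1 = i
        · obtain ⟨e, he, hi⟩ := h
          refine ⟨e.2.1, fun d hd hdi => ?_⟩
          rw [hinj hd he (hdi.trans hi.symm)]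
        · exact ⟨f0 i, fun e he hi => absurd ⟨e, he, hi⟩ h⟩
      choose σ hσ using hex
      refine ⟨M.image (fun e => e.1), σ, ?_, ?_⟩
      · intro i hi j hj hij
        simp only [Finset.mem_image] at hi hj
        obtain ⟨e, he, rfl⟩ := hi
        obtain ⟨d, hd, rfl⟩ := hj
        rw [← hσ _ e he rfl, ← hσ _ d hd rfl]
        by_contra hc
        refine h2 e he d hd ⟨?_, Or.inl ⟨(transGen_chainE _ _ _).2 hij, ?_⟩⟩
        · rintro rfl
          exact lt_irrefl _ hij
        · rwa [transGen_chainE]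
      · rw [Finset.sum_image hinj]
        refine Finset.sum_congr rfl fun e he => ?_
        rw [hw' e he, ← hσ _ e he rfl]
    · rintro ⟨s, σ, hσ, rfl⟩
      refine ⟨s.image (fun i => (i, σ i, w i (σ i))), ⟨?_, ?_, ?_⟩, ?_⟩
      · intro e he
        simp only [Finset.mem_image, Finset.mem_univ, true_and] at he ⊢
        obtain ⟨i, -, rfl⟩ := he
        exact ⟨(i, σ i), rfl⟩
      · intro e he d hd hne
        simp only [Finset.mem_image] at he hd
        obtain ⟨i, hi, rfl⟩ := he
        obtain ⟨j, hj, rfl⟩ := hd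
        have hij : i ≠ j := by rintro rfl; exact hne rfl
        refine ⟨hij, ?_⟩
        rcases lt_or_gt_of_ne hij with h | h
        · exact (hσ i hi j hj h).ne
        · exact (hσ j hj i hi h).ne'
      · intro e he d hd
        simp only [Finset.mem_image] at he hd
        obtain ⟨i, hi, rfl⟩ := he
        obtain ⟨j, hj, rfl⟩ := hd
        rintro ⟨hne, h⟩
        simp only [transGen_chainE] at h
        have hij : i ≠ j := by rintro rfl; exact hne rfl
        rcases h with ⟨h, h'⟩ | ⟨h, h'⟩ | h | h
        · exact h' (hσ i hi j hj h)
        · exact h' (hσ j hj i hi h)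
        · exact hij h
        · rcases lt_or_gt_of_ne hij with h' | h'
          · exact (hσ i hi j hj h').ne h
          · exact (hσ j hj i hi h').ne' h
      · rw [Finset.sum_image]
        intro i _ j _ h
        exact congrArg Prod.fst h
  · have hR : {x : ℝ | ∃ (s : Finset (Fin n)) (σ : Fin n → Fin k),
          (∀ i ∈ s, ∀ j ∈ s, i < j → σ i < σ j) ∧ ∑ i ∈ s, w i (σ i) = x} = ∅ := by
      ext x
      simp only [Set.mem_setOf_eq, Set.mem_empty_iff_false, iff_false]
      rintro ⟨s, σ, -⟩
      exact hne ⟨σ⟩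
    have hk : IsEmpty (Fin k) := ⟨fun j => hne ⟨fun _ => j⟩⟩
    rw [hR, Real.sSup_empty]
    apply le_antisymm
    · apply Real.sSup_le _ le_rfl
      rintro x ⟨M, -, rfl⟩
      exact (Finset.sum_eq_zero fun e _ => hk.elim e.2.1).le
    · apply Real.sSup_nonneg
      rintro x ⟨M, -, rfl⟩
      exact (Finset.sum_eq_zero fun e _ => hk.elim e.2.1).ge
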